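/- arXiv:1308.5517 — 3 statements merged into one kernel-verified Lean document; each statement's English description precedes it below -/
import Mathlib

section
/- Let K be a local class, over a locally finite relational signature, every member of which satisfies the Symmetry schema; let F be the Fraïssé limit of K with underlying set V. Let H be a finite group, S ⊂ V a finite subset, and v ∈ V ∖ S. Suppose ρ is a left action of H on F↾S by automorphisms. Then there is a finite subset S' ⊂ V with S ∪ {v} ⊆ S' such that ρ extends to an action of H on F↾S' by automorphisms with trivial stabilizers on S' ∖ S. -/
open FirstOrder FirstOrder.Language

universe u v

/-- A finite structure for a relational signature `L`, with underlying set a finite subset of `ℕ`,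
given by its relation interpretations (sets of tuples of natural numbers). -/
structure FinStruc (L : FirstOrder.Language.{u, v}) where
  carrier : Finset ℕ
  rel : ∀ ⦃n : ℕ⦄, L.Relations n → Set (Fin n → ℕ)
  rel_mem : ∀ ⦃n : ℕ⦄ (R : L.Relations n) (t : Fin n → ℕ), t ∈ rel R → ∀ i, t i ∈ carrier

variable {L : FirstOrder.Language.{u, v}}

/-- The first-order structure on the underlying set of a `FinStruc`. -/
instance FinStruc.str [L.IsRelational] (A : FinStruc L) :
    L.Structure {x : ℕ // x ∈ A.carrier} where
  funMap := fun f _ => isEmptyElim f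
  RelMap := fun {n} R t => (fun i => (t i : ℕ)) ∈ A.rel R

/-- Satisfaction of a sentence in a `FinStruc`. -/
def FinStruc.Sat [L.IsRelational] (A : FinStruc L) (φ : L.Sentence) : Prop :=
  {x : ℕ // x ∈ A.carrier} ⊨ φ

/-- The General Irreflexivity axiom for a relation symbol `R` and coordinates `i`, `j`:
`∀ x₁ … xₙ, R (x₁, …, xₙ) → ¬ (xᵢ = xⱼ)`. -/
def giSentence {n : ℕ} (R : L.Relations n) (i j : Fin n) : L.Sentence :=
  BoundedFormula.alls
    ((Relations.boundedFormula R fun k => Term.var (Sum.inr k)).imp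
      (Term.bdEqual (Term.var (Sum.inr i)) (Term.var (Sum.inr j))).not)

/-- The General Irreflexivity axiom schema `Φ^Σ_GI`. -/
def GITheory (L : FirstOrder.Language.{u, v}) : L.Theory :=
  { φ | ∃ (n : ℕ) (R : L.Relations n) (i j : Fin n), i ≠ j ∧ φ = giSentence R i j }

/-- A sentence is local if it has the form `∀ x₁ … xₘ, R (x₁, …, xₘ) → ψ` with `m > 0` and
`ψ` quantifier-free. -/
def IsLocalSentence (φ : L.Sentence) : Prop :=
  ∃ m : ℕ, 0 < m ∧ ∃ (R : L.Relations m) (ψ : L.BoundedFormula Empty m), ψ.IsQF ∧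
    φ = BoundedFormula.alls ((Relations.boundedFormula R fun k => Term.var (Sum.inr k)).imp ψ)

/-- A class of finite structures is local if it is the class of models of a set of local
sentences containing the General Irreflexivity axioms. -/
def IsLocalClass [L.IsRelational] (K : Set (FinStruc L)) : Prop :=
  ∃ Φ : L.Theory, (∀ φ ∈ Φ, IsLocalSentence φ) ∧ GITheory L ⊆ Φ ∧
    K = { A : FinStruc L | ∀ φ ∈ Φ, A.Sat φ }

/-- The `n`-frame of a structure: same underlying set, same interpretations of relation symbols
of arity at most `n`, empty interpretation of all higher-arity relation symbols. -/
def FinStruc.frame (A : FinStruc L) (n : ℕ) : FinStruc L where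
  carrier := A.carrier
  rel := fun m R => if m ≤ n then A.rel R else ∅
  rel_mem := by
    intro m R t ht i
    by_cases h : m ≤ n
    · exact A.rel_mem R t (by simpa [h] using ht) i
    · simp [h] at ht

/-- The induced substructure of `B` on a finite set `X`. -/
def FinStruc.restrict (B : FinStruc L) (X : Finset ℕ) : FinStruc L where
  carrier := B.carrier ∩ X
  rel := fun _ R => { t | t ∈ B.rel R ∧ ∀ i, t i ∈ X }
  rel_mem := fun _ R t ht i => Finset.mem_inter.2 ⟨B.rel_mem R t ht.1 i, ht.2 i⟩

/-- `A` is the induced substructure of `B` on the subset `A.carrier` of `B.carrier`. -/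
def FinStruc.IsInducedSub (A B : FinStruc L) : Prop :=
  A.carrier ⊆ B.carrier ∧
    ∀ ⦃n : ℕ⦄ (R : L.Relations n) (t : Fin n → ℕ),
      (∀ i, t i ∈ A.carrier) → (t ∈ A.rel R ↔ t ∈ B.rel R)

/-- `A` is isomorphic to `B`: there is a bijection of the underlying sets preserving all
relations in both directions. -/
def FinStruc.IsIsoTo (A B : FinStruc L) : Prop :=
  ∃ f : ℕ → ℕ, Set.BijOn f ↑A.carrier ↑B.carrier ∧
    ∀ ⦃n : ℕ⦄ (R : L.Relations n) (t : Fin n → ℕ), (∀ i, t i ∈ A.carrier) →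
      (t ∈ A.rel R ↔ (fun i => f (t i)) ∈ B.rel R)

/-- The Adoptive Property. -/
def AdoptiveProperty (K : Set (FinStruc L)) : Prop :=
  ∀ (n : ℕ) (B A A' : FinStruc L), B ∈ K → A ∈ K → A' ∈ K →
    A.IsInducedSub B → A.carrier.card = n → A'.carrier = A.carrier →
    A'.frame (n - 1) = A.frame (n - 1) →
    ∃ B' ∈ K, B'.carrier = B.carrier ∧ B'.frame (n - 1) = B.frame (n - 1) ∧
      ∀ R : L.Relations n,
        B'.rel R = (B.rel R \ { t | ∀ i, t i ∈ A.carrier }) ∪ A'.rel R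

/-- A structure for `L` with underlying set `ℕ`, given by its relation interpretations. -/
structure InfStruc (L : FirstOrder.Language.{u, v}) where
  rel : ∀ ⦃n : ℕ⦄, L.Relations n → Set (Fin n → ℕ)

/-- The first-order structure on `ℕ` determined by an `InfStruc`. -/
def InfStruc.str [L.IsRelational] (M : InfStruc L) : L.Structure ℕ where
  funMap := fun f _ => isEmptyElim f
  RelMap := fun {n} R t => t ∈ M.rel R

/-- Satisfaction of a sentence in an `InfStruc`. -/
def InfStruc.Sat [L.IsRelational] (M : InfStruc L) (φ : L.Sentence) : Prop :=
  @FirstOrder.Language.Sentence.Realize L ℕ M.str φ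

/-- The induced finite substructure of an `InfStruc` on a finite set `X`. -/
def InfStruc.restrict (M : InfStruc L) (X : Finset ℕ) : FinStruc L where
  carrier := X
  rel := fun _ R => { t | t ∈ M.rel R ∧ ∀ i, t i ∈ X }
  rel_mem := fun _ _ _ ht i => ht.2 i

/-- The bundled structures isomorphic to a member of `K`. -/
def toBundled (L : FirstOrder.Language.{u, v}) [L.IsRelational] (K : Set (FinStruc L)) :
    Set (CategoryTheory.Bundled.{0} L.Structure) :=
  { M | ∃ A ∈ K, Nonempty (M ≃[L] {x : ℕ // x ∈ A.carrier}) }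

/-- `K^{X,l}_{A,k}`: the set of `l`-frames of members `B` of `K` with underlying set `X` whose
`k`-frame restricted to the underlying set of `A` is the `k`-frame of `A`. -/
def KsetFr (K : Set (FinStruc L)) (X : Finset ℕ) (l : ℕ) (A : FinStruc L) (k : ℕ) :
    Set (FinStruc L) :=
  { F | ∃ B ∈ K, B.carrier = X ∧ (B.frame k).restrict A.carrier = A.frame k ∧ F = B.frame l }

/-- `N(S,k)`: the number of distinct `(k+1)`-frames of members of `K` on the underlying set of `S`
whose `k`-frame is the `k`-frame of `S`. -/
noncomputable def Ncount (K : Set (FinStruc L)) (S : FinStruc L) (k : ℕ) : ℕ :=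
  (KsetFr K S.carrier (k + 1) S k).ncard

/-- Every member of `K` satisfies the Symmetry schema: each relation is invariant under all
permutations of its arguments. -/
def SymmetricClass (K : Set (FinStruc L)) : Prop :=
  ∀ A ∈ K, ∀ ⦃n : ℕ⦄ (R : L.Relations n) (σ : _root_.Equiv.Perm (Fin n)) (t : Fin n → ℕ),
    t ∈ A.rel R → (t ∘ σ) ∈ A.rel R

/-- `ρ` is a left action of the group `H` on the induced substructure of `F` on the subset `S`,
by automorphisms of that substructure. -/
def ActsOn (L : FirstOrder.Language.{u, v}) (F : Type*) [L.Structure F] (H : Type*) [Group H]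
    (ρ : H → F → F) (S : Set F) : Prop :=
  (∀ h : H, Set.BijOn (ρ h) S S) ∧
  (∀ x ∈ S, ρ 1 x = x) ∧
  (∀ g h : H, ∀ x ∈ S, ρ (g * h) x = ρ g (ρ h x)) ∧
  (∀ h : H, ∀ ⦃n : ℕ⦄ (R : L.Relations n) (t : Fin n → F), (∀ i, t i ∈ S) →
    (Structure.RelMap R t ↔ Structure.RelMap R fun i => ρ h (t i)))

namespace Stmt14

/-- A finite model of the axioms belongs to the bundled class. -/
theorem mem_toBundled (L : FirstOrder.Language.{u, v}) [L.IsRelational] (Φ : L.Theory)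
    (T : Type) [L.Structure T] [Finite T] (hT : ∀ φ ∈ Φ, T ⊨ φ) :
    (⟨T, inferInstance⟩ : CategoryTheory.Bundled.{0} L.Structure) ∈ toBundled L { A : FinStruc L | ∀ φ ∈ Φ, A.Sat φ } := by
  classical
  obtain ⟨n, ⟨e⟩⟩ := Finite.exists_equiv_fin T
  let A : FinStruc L :=
    { carrier := Finset.range n
      rel := fun m R => { t | ∃ w : Fin m → T, Structure.RelMap R w ∧ ∀ i, t i = (e (w i) : ℕ) }
      rel_mem := by
        rintro m R t ⟨w, -, hw⟩ i
        rw [hw i]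
        exact Finset.mem_range.2 (e (w i)).2 }
  let f : T ≃ {x : ℕ // x ∈ A.carrier} :=
    { toFun := fun x => ⟨e x, Finset.mem_range.2 (e x).2⟩
      invFun := fun y => e.symm ⟨y.1, Finset.mem_range.1 y.2⟩
      left_inv := fun x => by simp
      right_inv := fun y => by simp }
  let : L.Structure {x : ℕ // x ∈ A.carrier} := FinStruc.str A
  let E : T ≃[L] {x : ℕ // x ∈ A.carrier} :=
    { f with
      map_fun' := fun g => isEmptyElim g
      map_rel' := by
        intro m R x
        constructor
        · rintro ⟨w, hw, h⟩
          have : x = w := by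
            funext i
            exact e.injective (Fin.ext (h i))
          rwa [this]
        · intro h
          exact ⟨x, h, fun i => rfl⟩ }
  exact ⟨A, fun φ hφ => (StrongHomClass.realize_sentence E φ).1 (hT φ hφ), ⟨E⟩⟩

variable {F : Type} [L.Structure F] {H : Type} [Group H]

/-- The underlying set of the free amalgam. -/
def Amal (_L : FirstOrder.Language.{u, v}) (S : Set F) (H : Type) : Type := S ⊕ H

instance (S : Set F) [Finite S] [Finite H] : Finite (Amal L S H) :=
  inferInstanceAs (Finite (S ⊕ H))

open Classical in
/-- The copies of `S ∪ {v}`, where `a` is the action of `H` on `S`. -/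
noncomputable def copy (L : FirstOrder.Language.{u, v}) (S : Set F) (v : F) (a : H → S → S)
    (h : H) (p : ↥(S ∪ {v})) : Amal L S H :=
  if hp : (p : F) ∈ S then Sum.inl (a h ⟨p, hp⟩) else Sum.inr h

end Stmt14

/-- Any action of a finite group on a finite induced substructure of the Fraïssé limit of a
local class with symmetric relations extends, for any further vertex `v`, to an action on a
larger finite induced substructure with trivial stabilizers on the new points. -/
theorem statement_14 (L : FirstOrder.Language.{u, v}) [L.IsRelational]
    [∀ n, Finite (L.Relations n)] [Countable (Σ l, L.Functions l)]
    (K : Set (FinStruc L)) (hK : IsLocalClass K) (hsym : SymmetricClass K)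
    (F : Type) [L.Structure F] [Countable F] (hF : IsFraisseLimit (toBundled L K) F)
    (H : Type) [Group H] [Finite H]
    (S : Set F) (hS : S.Finite) (v : F) (hv : v ∉ S)
    (ρ : H → F → F) (hρ : ActsOn L F H ρ S) :
    ∃ S' : Set F, S'.Finite ∧ S ∪ {v} ⊆ S' ∧
      ∃ ρ' : H → F → F, ActsOn L F H ρ' S' ∧
        (∀ h : H, ∀ x ∈ S, ρ' h x = ρ h x) ∧
        (∀ h : H, ∀ x ∈ S' \ S, ρ' h x = x → h = 1) := by
  classical
  obtain ⟨Φ, hloc, -, rfl⟩ := hK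
  obtain ⟨hbij, hone, hmul, hrel⟩ := hρ
  have : Finite S := hS
  let a : H → S → S := fun h x => ⟨ρ h x, (hbij h).mapsTo x.2⟩
  have a_inj : ∀ h, Function.Injective (a h) := by
    intro h x y hxy
    exact Subtype.ext ((hbij h).injOn x.2 y.2 (congrArg Subtype.val hxy))
  have a_one : ∀ x, a 1 x = x := fun x => Subtype.ext (hone x x.2)
  have a_mul : ∀ g h x, a (g * h) x = a g (a h x) := fun g h x => Subtype.ext (hmul g h x x.2)
  let P : L.Substructure F := ⟨S ∪ {v}, fun g => isEmptyElim g⟩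
  have : Finite P := (hS.union (Set.finite_singleton v)).to_subtype
  let T := Stmt14.Amal L S H
  let c : H → P → T := Stmt14.copy L S v a
  have c_mem : ∀ h (p : P) (hp : (p : F) ∈ S), c h p = Sum.inl (a h ⟨p, hp⟩) :=
    fun h p hp => dif_pos hp
  have c_not : ∀ h (p : P) (_ : (p : F) ∉ S), c h p = Sum.inr h := fun h p hp => dif_neg hp
  have P_not : ∀ p : P, (p : F) ∉ S → (p : F) = v := fun p hp => p.2.resolve_left hp
  have c_inj : ∀ h, Function.Injective (c h) := by
    intro h p q hpq
    by_cases hp : (p : F) ∈ S <;> by_cases hq : (q : F) ∈ S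
    · rw [c_mem h p hp, c_mem h q hq] at hpq
      have := a_inj h (Sum.inl_injective hpq)
      exact Subtype.ext (congrArg (fun z : S => (z : F)) this)
    · rw [c_mem h p hp, c_not h q hq] at hpq
      cases hpq
    · rw [c_not h p hp, c_mem h q hq] at hpq
      cases hpq
    · exact Subtype.ext ((P_not p hp).trans (P_not q hq).symm)
  let strT : L.Structure T :=
    { funMap := fun g => isEmptyElim g
      RelMap := fun {n} R t => ∃ (h : H) (w : Fin n → P), Structure.RelMap R w ∧ t = c h ∘ w }
  have rel_iff : ∀ (h : H) {n : ℕ} (R : L.Relations n) (w : Fin n → P),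
      Structure.RelMap R (c h ∘ w) ↔ Structure.RelMap R w := by
    intro h n R w
    constructor
    · rintro ⟨h', w', hw', he⟩
      by_cases hall : ∀ i, (w i : F) ∈ S
      · have hall' : ∀ i, (w' i : F) ∈ S := by
          intro i
          by_contra hi
          have := congrFun he i
          simp only [Function.comp_apply] at this
          rw [c_mem h _ (hall i), c_not h' _ hi] at this
          cases this
        have heq : ∀ i, ρ h (w i) = ρ h' (w' i) := by
          intro i
          have := congrFun he i
          simp only [Function.comp_apply] at this
          rw [c_mem h _ (hall i), c_mem h' _ (hall' i)] at this
          exact congrArg Subtype.val (Sum.inl_injective this)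
        have h1 := (hrel h' R (fun i => (w' i : F)) hall').1 hw'
        rw [← funext heq] at h1
        exact (hrel h R (fun i => (w i : F)) hall).2 h1
      · push Not at hall
        obtain ⟨i, hi⟩ := hall
        have := congrFun he i
        simp only [Function.comp_apply] at this
        rw [c_not h _ hi] at this
        have hi' : (w' i : F) ∉ S := by
          intro hi'
          rw [c_mem h' _ hi'] at this
          cases this
        rw [c_not h' _ hi'] at this
        obtain rfl : h = h' := Sum.inr_injective this
        have : w = w' := by
          funext j
          exact c_inj h (congrFun he j)
        rwa [this]
    · intro hw
      exact ⟨h, w, hw, rfl⟩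
  let C : H → (P ↪[L] T) := fun h =>
    { toFun := c h
      inj' := c_inj h
      map_fun' := fun g => isEmptyElim g
      map_rel' := fun R w => rel_iff h R w }
  have : Finite T := inferInstanceAs (Finite (Stmt14.Amal L S H))
  -- the small substructure is a model
  have hP : ∀ φ ∈ Φ, P ⊨ φ := by
    have : (⟨P, inferInstance⟩ : CategoryTheory.Bundled.{0} L.Structure) ∈ L.age F := ⟨Structure.FG.of_finite, ⟨P.subtype⟩⟩
    rw [hF.age] at this
    obtain ⟨A, hA, ⟨E⟩⟩ := this
    intro φ hφ
    exact (StrongHomClass.realize_sentence E φ).2 (hA φ hφ)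
  have hT : ∀ φ ∈ Φ, T ⊨ φ := by
    intro φ hφ
    have h1 := hP φ hφ
    obtain ⟨m, -, R, ψ, hψ, rfl⟩ := hloc φ hφ
    simp only [Sentence.Realize, BoundedFormula.realize_alls,
      BoundedFormula.realize_imp, BoundedFormula.realize_rel, Term.realize_var,
      Sum.elim_inr] at h1 ⊢
    rintro t ⟨h, w, hw, ht⟩
    obtain rfl : t = c h ∘ w := ht
    have h2 := h1 w hw
    have h3 := (hψ.realize_embedding (C h) (v := default) (xs := w)).2 h2
    convert! h3
  have hTF : (⟨T, inferInstance⟩ : CategoryTheory.Bundled.{0} L.Structure) ∈ L.age F := by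
    rw [hF.age]
    exact Stmt14.mem_toBundled L Φ T hT
  obtain ⟨-, hne⟩ := hTF
  have : Nonempty (T ↪[L] F) := hne
  obtain ⟨e, he⟩ := hF.ultrahomogeneous.extend_embedding (Structure.FG.of_finite (M := P))
    P.subtype (C 1)
  have he' : ∀ p : P, e (c 1 p) = p := fun p => (DFunLike.congr_fun he p).symm
  -- the action on the amalgam
  let b : H → T → T := fun h => Sum.map (a h) (fun g => h * g)
  have b_c : ∀ g h p, b g (c h p) = c (g * h) p := by
    intro g h p
    by_cases hp : (p : F) ∈ S
    · rw [c_mem _ _ hp, c_mem _ _ hp, a_mul]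
      rfl
    · rw [c_not _ _ hp, c_not _ _ hp]
      rfl
  have b_one : ∀ x, b 1 x = x := by
    rintro (x | g)
    · exact congrArg Sum.inl (a_one x)
    · exact congrArg Sum.inr (one_mul g)
  have b_mul : ∀ g h x, b (g * h) x = b g (b h x) := by
    rintro g h (x | k)
    · exact congrArg Sum.inl (a_mul g h x)
    · exact congrArg Sum.inr (mul_assoc g h k)
  have b_rel1 : ∀ (g : H) {n : ℕ} (R : L.Relations n) (t : Fin n → T),
      Structure.RelMap R t → Structure.RelMap R (fun i => b g (t i)) := by
    rintro g n R t ⟨h, w, hw, rfl⟩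
    exact ⟨g * h, w, hw, funext fun i => b_c g h (w i)⟩
  have b_rel : ∀ (g : H) {n : ℕ} (R : L.Relations n) (t : Fin n → T),
      Structure.RelMap R t ↔ Structure.RelMap R (fun i => b g (t i)) := by
    intro g n R t
    refine ⟨b_rel1 g R t, fun h => ?_⟩
    have := b_rel1 g⁻¹ R _ h
    simpa only [← b_mul, inv_mul_cancel, b_one] using this
  have e_inl : ∀ x : S, e (Sum.inl x : T) = x := by
    intro x
    have := he' ⟨x, Or.inl x.2⟩
    rw [c_mem 1 _ x.2] at this
    rw [a_one] at this
    exact this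
  have e_v : e (Sum.inr 1 : T) = v := by
    have := he' ⟨v, Or.inr rfl⟩
    rw [c_not 1 _ hv] at this
    exact this
  let ρ' : H → F → F := fun h x => if hx : ∃ y, e y = x then e (b h hx.choose) else x
  have hρ' : ∀ h y, ρ' h (e y) = e (b h y) := by
    intro h y
    have hx : ∃ z, e z = e y := ⟨y, rfl⟩
    have : ρ' h (e y) = e (b h hx.choose) := dif_pos hx
    rw [this, e.injective hx.choose_spec]
  refine ⟨Set.range e, Set.finite_range e, ?_, ρ', ⟨?_, ?_, ?_, ?_⟩, ?_, ?_⟩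
  · rintro x (hx | rfl)
    · exact ⟨_, e_inl ⟨x, hx⟩⟩
    · exact ⟨_, e_v⟩
  · intro h
    refine ⟨?_, ?_, ?_⟩
    · rintro _ ⟨y, rfl⟩
      exact ⟨_, (hρ' h y).symm⟩
    · rintro _ ⟨y, rfl⟩ _ ⟨z, rfl⟩ hyz
      rw [hρ', hρ'] at hyz
      have := congrArg (b h⁻¹) (e.injective hyz)
      simp only [← b_mul, inv_mul_cancel, b_one] at this
      rw [this]
    · rintro _ ⟨y, rfl⟩
      refine ⟨e (b h⁻¹ y), ⟨_, rfl⟩, ?_⟩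
      rw [hρ', ← b_mul, mul_inv_cancel, b_one]
  · rintro _ ⟨y, rfl⟩
    rw [hρ', b_one]
  · rintro g h _ ⟨y, rfl⟩
    rw [hρ', hρ', hρ', b_mul]
  · intro h n R t ht
    choose s hs using ht
    obtain rfl : (fun i => e (s i)) = t := funext hs
    simp only [hρ']
    exact (e.map_rel R s).trans ((b_rel h R s).trans (e.map_rel R _).symm)
  · intro h x hx
    have h1 := hρ' h (Sum.inl ⟨x, hx⟩)
    rw [e_inl] at h1
    rw [h1]
    exact e_inl (a h ⟨x, hx⟩)
  · rintro h _ ⟨⟨y, rfl⟩, hy⟩ hfix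
    rw [hρ'] at hfix
    have := e.injective hfix
    rcases y with x | g
    · exact absurd ((e_inl x).symm ▸ x.2) hy
    · exact mul_eq_right.1 (Sum.inr_injective this)
end

section
/- Let K be a local class, over a locally finite relational signature, every member of which satisfies the Symmetry schema, and let F be the Fraïssé limit of K. If G is the direct limit of a sequence of injective homomorphisms of finite groups G_1 ↪ G_2 ↪ G_3 ↪ …, then G has an action on F by automorphisms with trivial stabilizers (i.e., a free action). -/
open FirstOrder FirstOrder.Language

universe u v

variable {L : FirstOrder.Language.{u, v}}

section Helpers

/-- A task: a finite partial map from `ℕ × G` to `F`, and one more point of `F`. -/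
abbrev PTask (F G : Type) := Σ n : ℕ, (Fin n → ℕ × G) × (Fin n → F) × F

/-- A system of relations on `ℕ × G`. -/
abbrev RelSys (L : FirstOrder.Language.{u, v}) (G : Type) :=
  ∀ n : ℕ, L.Relations n → (Fin n → ℕ × G) → Prop

variable {F G : Type} [L.Structure F] [Group G]

/-- Free action of `G` on `ℕ × G`. -/
def shiftG (g : G) (p : ℕ × G) : ℕ × G := (p.1, g * p.2)

/-- The task `T` is meaningful at stage `k`. -/
structure ValidTask (k : ℕ) (P : RelSys L G) (T : PTask F G) : Prop where
  sinj : Function.Injective T.2.1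
  ainj : Function.Injective T.2.2.1
  bnot : ∀ i, T.2.2.1 i ≠ T.2.2.2
  lev : ∀ i, (T.2.1 i).1 < k
  iso : ∀ (m : ℕ) (R : L.Relations m) (τ : Fin m → Fin T.1),
    P m R (T.2.1 ∘ τ) ↔ Structure.RelMap R (T.2.2.1 ∘ τ)

/-- Source points of the translate by `g` of the extended partial map. -/
def srcT (T : PTask F G) (k : ℕ) (g : G) : Option (Fin T.1) → ℕ × G
  | none => (k, g)
  | some i => shiftG g (T.2.1 i)

/-- Target points of the extended partial map. -/
def tgtT (T : PTask F G) : Option (Fin T.1) → F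
  | none => T.2.2.2
  | some i => T.2.2.1 i

/-- One step of the construction. -/
def stepT (k : ℕ) (T : PTask F G) (P : RelSys L G) : RelSys L G := fun n R t =>
  P n R t ∨ (ValidTask k P T ∧ ∃ (g : G) (τ : Fin n → Option (Fin T.1)),
    (∃ j, τ j = none) ∧ t = srcT T k g ∘ τ ∧ Structure.RelMap R (tgtT T ∘ τ))

/-- The stages of the construction. -/
def stageT (e : ℕ → PTask F G) : ℕ → RelSys L G
  | 0 => fun n R _ => n = 0 ∧ ∀ u : Fin n → F, Structure.RelMap R u
  | k + 1 => stepT k (e k) (stageT e k)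

/-- Each related tuple spans a copy of a finite substructure of `F`. -/
def LocF (F : Type) [L.Structure F] (P : RelSys L G) : Prop :=
  ∀ (n : ℕ) (R : L.Relations n) (t : Fin n → ℕ × G), P n R t →
    ∃ w : Fin n → F, (∀ i j, w i = w j ↔ t i = t j) ∧
      ∀ (m : ℕ) (R' : L.Relations m) (τ : Fin m → Fin n),
        P m R' (t ∘ τ) ↔ Structure.RelMap R' (w ∘ τ)

theorem shiftG_inj (g : G) : Function.Injective (shiftG g) := by
  rintro ⟨a, b⟩ ⟨c, d⟩ h
  simpa [shiftG] using h

theorem stage_lev (e : ℕ → PTask F G) (k : ℕ) : ∀ (n : ℕ) (R : L.Relations n) (t : Fin n → ℕ × G),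
    stageT e k n R t → ∀ i, (t i).1 < k := by
  induction k with
  | zero =>
    rintro n R t ⟨rfl, -⟩ i
    exact i.elim0
  | succ k ih =>
    rintro n R t (h | ⟨hv, g, τ, -, rfl, -⟩) i
    · exact (ih n R t h i).trans (Nat.lt_succ_self k)
    · show (srcT (e k) k g (τ i)).1 < k + 1
      cases hτ : τ i with
      | none => simp [srcT]
      | some j => simpa [srcT, shiftG] using (hv.lev j).trans (Nat.lt_succ_self k)

theorem stage_old (e : ℕ → PTask F G) (k : ℕ) {n : ℕ} (R : L.Relations n) (t : Fin n → ℕ × G)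
    (ht : ∀ i, (t i).1 < k) : stageT e (k + 1) n R t ↔ stageT e k n R t := by
  constructor
  · rintro (h | ⟨hv, g, τ, ⟨j, hj⟩, rfl, -⟩)
    · exact h
    · have := ht j
      simp [hj, srcT] at this
  · exact Or.inl

theorem stage_shift (e : ℕ → PTask F G) (k : ℕ) : ∀ (g : G) (n : ℕ) (R : L.Relations n)
    (t : Fin n → ℕ × G), stageT e k n R t → stageT e k n R (shiftG g ∘ t) := by
  induction k with
  | zero => exact fun g n R t h => h
  | succ k ih =>
    rintro g n R t (h | ⟨hv, g', τ, hj, rfl, hr⟩)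
    · exact Or.inl (ih g n R t h)
    · refine Or.inr ⟨hv, g * g', τ, hj, ?_, hr⟩
      funext i
      simp only [Function.comp]
      cases τ i <;> simp [srcT, shiftG, mul_assoc]

theorem shift_shift (g : G) {n : ℕ} (t : Fin n → ℕ × G) :
    shiftG g⁻¹ ∘ (shiftG g ∘ t) = t := by
  funext i
  simp [shiftG]

theorem stage_shift_iff (e : ℕ → PTask F G) (k : ℕ) (g : G) {n : ℕ} (R : L.Relations n)
    (t : Fin n → ℕ × G) : stageT e k n R (shiftG g ∘ t) ↔ stageT e k n R t :=
  ⟨fun h => by simpa [shift_shift] using stage_shift e k g⁻¹ n R _ h, stage_shift e k g n R t⟩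

theorem srcT_inj {k : ℕ} {P : RelSys L G} {T : PTask F G} (hv : ValidTask k P T) (g : G) :
    Function.Injective (srcT T k g) := by
  intro x y h
  cases x with
  | none =>
    cases y with
    | none => rfl
    | some j =>
      have := hv.lev j
      have h1 := congrArg Prod.fst h
      simp [srcT, shiftG] at h1
      omega
  | some i =>
    cases y with
    | none =>
      have := hv.lev i
      have h1 := congrArg Prod.fst h
      simp [srcT, shiftG] at h1
      omega
    | some j => rw [hv.sinj (shiftG_inj g h)]

theorem tgtT_inj {k : ℕ} {P : RelSys L G} {T : PTask F G} (hv : ValidTask k P T) :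
    Function.Injective (tgtT T) := by
  intro x y h
  cases x with
  | none =>
    cases y with
    | none => rfl
    | some j => exact absurd h.symm (hv.bnot j)
  | some i =>
    cases y with
    | none => exact absurd h (hv.bnot i)
    | some j => rw [hv.ainj h]

theorem stage_new (e : ℕ → PTask F G) (k : ℕ) (hv : ValidTask k (stageT (L := L) e k) (e k)) (g : G)
    {m : ℕ} (R : L.Relations m) (τ : Fin m → Option (Fin (e k).1)) :
    stageT e (k + 1) m R (srcT (e k) k g ∘ τ) ↔ Structure.RelMap R (tgtT (e k) ∘ τ) := by
  by_cases hn : ∃ j, τ j = none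
  · constructor
    · rintro (h | ⟨-, g', τ', ⟨j', hj'⟩, heq, hr⟩)
      · obtain ⟨j, hj⟩ := hn
        have := stage_lev e k m R _ h j
        simp [hj, srcT] at this
      · have h1 := congrFun heq j'
        simp only [Function.comp, hj'] at h1
        have hg : g' = g := by
          cases hτ : τ j' with
          | none =>
            rw [hτ] at h1
            exact (congrArg Prod.snd h1).symm
          | some i =>
            rw [hτ] at h1
            have h2 := congrArg Prod.fst h1
            have := hv.lev i
            simp [srcT, shiftG] at h2
            omega
        subst hg
        have : τ = τ' := funext fun i => srcT_inj hv g' (congrFun heq i)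
        rwa [this]
    · exact fun hr => Or.inr ⟨hv, g, τ, hn, rfl, hr⟩
  · push Not at hn
    choose τ' hτ' using fun j => Option.ne_none_iff_exists'.1 (hn j)
    obtain rfl : τ = some ∘ τ' := funext hτ'
    have h1 : srcT (e k) k g ∘ (some ∘ τ') = shiftG g ∘ ((e k).2.1 ∘ τ') := rfl
    have h2 : tgtT (e k) ∘ (some ∘ τ') = (e k).2.2.1 ∘ τ' := rfl
    rw [h1, h2, stage_old, stage_shift_iff, hv.iso]
    intro i
    exact hv.lev (τ' i)

theorem stage_locF (e : ℕ → PTask F G) (k : ℕ) : LocF F (stageT (L := L) e k) := by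
  induction k with
  | zero =>
    rintro n R t ⟨rfl, -⟩
    refine ⟨fun i => i.elim0, fun i => i.elim0, fun m R' τ => ?_⟩
    obtain rfl : m = 0 := by
      rcases Nat.eq_zero_or_pos m with h | h
      · exact h
      · exact (τ ⟨0, h⟩).elim0
    constructor
    · exact fun h => h.2 _
    · intro h
      refine ⟨rfl, fun w => ?_⟩
      rwa [Subsingleton.elim w]
  | succ k ih =>
    rintro n R t (h | ⟨hv, g, τ, hj, rfl, hr⟩)
    · obtain ⟨w, hw1, hw2⟩ := ih n R t h
      refine ⟨w, hw1, fun m R' τ => ?_⟩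
      rw [stage_old, hw2]
      exact fun i => stage_lev e k n R t h (τ i)
    · refine ⟨tgtT (e k) ∘ τ, fun i j => ?_, fun m R' σ => ?_⟩
      · simp [(tgtT_inj hv).eq_iff, (srcT_inj hv g).eq_iff]
      · exact stage_new e k hv g R' (τ ∘ σ)

/-- The union of the stages. -/
def limT (e : ℕ → PTask F G) : RelSys L G := fun n R t => ∃ k, stageT e k n R t

theorem limT_iff (e : ℕ → PTask F G) (k : ℕ) {n : ℕ} (R : L.Relations n) (t : Fin n → ℕ × G)
    (ht : ∀ i, (t i).1 < k) : limT e n R t ↔ stageT e k n R t := by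
  have up : ∀ d j, stageT e j n R t → stageT e (j + d) n R t := by
    intro d
    induction d with
    | zero => exact fun j h => h
    | succ d ih => exact fun j h => Or.inl (ih j h)
  have dn : ∀ d, stageT e (k + d) n R t → stageT e k n R t := by
    intro d
    induction d with
    | zero => exact fun h => h
    | succ d ih =>
      exact fun h => ih ((stage_old e (k + d) R t fun i => (ht i).trans_le (by omega)).1 h)
  constructor
  · rintro ⟨j, hj⟩
    rcases le_total j k with h | h
    · obtain ⟨d, rfl⟩ := Nat.exists_eq_add_of_le h
      exact up d j hj
    · obtain ⟨d, rfl⟩ := Nat.exists_eq_add_of_le h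
      exact dn d hj
  · exact fun h => ⟨k, h⟩

theorem limT_locF (e : ℕ → PTask F G) : LocF F (limT (L := L) e) := by
  rintro n R t ⟨k, hk⟩
  obtain ⟨w, hw1, hw2⟩ := stage_locF e k n R t hk
  refine ⟨w, hw1, fun m R' τ => ?_⟩
  rw [limT_iff e k, hw2]
  exact fun i => stage_lev e k n R t hk (τ i)

theorem limT_shift (e : ℕ → PTask F G) (g : G) {n : ℕ} (R : L.Relations n) (t : Fin n → ℕ × G) :
    limT e n R (shiftG g ∘ t) ↔ limT e n R t :=
  exists_congr fun k => stage_shift_iff e k g R t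

theorem limT_ext (e : ℕ → PTask F G) (he : ∀ T k, ∃ j, k ≤ j ∧ e j = T) {n : ℕ}
    (s : Fin n → ℕ × G) (a : Fin n → F) (b : F) (hs : Function.Injective s)
    (ha : Function.Injective a) (hb : ∀ i, a i ≠ b)
    (iso : ∀ (m : ℕ) (R : L.Relations m) (τ : Fin m → Fin n),
      limT e m R (s ∘ τ) ↔ Structure.RelMap R (a ∘ τ)) :
    ∃ s' : Option (Fin n) → ℕ × G, Function.Injective s' ∧ (∀ i, s' (some i) = s i) ∧
      ∀ (m : ℕ) (R : L.Relations m) (τ : Fin m → Option (Fin n)),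
        limT e m R (s' ∘ τ) ↔ Structure.RelMap R ((fun o => Option.elim o b a) ∘ τ) := by
  obtain ⟨k0, hk0⟩ : ∃ k0, ∀ i, (s i).1 < k0 :=
    ⟨(Finset.univ.sup fun i => (s i).1) + 1, fun i =>
      Nat.lt_succ_of_le (Finset.le_sup (f := fun i => (s i).1) (Finset.mem_univ i))⟩
  obtain ⟨k, hk, hek⟩ := he ⟨n, s, a, b⟩ k0
  have hv' : ValidTask k (stageT (L := L) e k) (⟨n, s, a, b⟩ : PTask F G) := by
    refine ⟨hs, ha, hb, fun i => (hk0 i).trans_le hk, fun m R τ => ?_⟩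
    rw [← limT_iff e k]
    · exact iso m R τ
    · exact fun i => (hk0 (τ i)).trans_le hk
  have hv : ValidTask k (stageT (L := L) e k) (e k) := by rw [hek]; exact hv'
  have key := fun {m : ℕ} (R : L.Relations m) (τ) => stage_new e k hv 1 R τ
  rw [hek] at key
  refine ⟨srcT ⟨n, s, a, b⟩ k 1, srcT_inj hv' 1, fun i => ?_, fun m R τ => ?_⟩
  · simp [srcT, shiftG]
  · rw [limT_iff e (k + 1), key R τ]
    · have : tgtT (⟨n, s, a, b⟩ : PTask F G) = fun o => Option.elim o b a := by
        funext o; cases o <;> rfl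
      rw [this]
    · intro i
      simp only [Function.comp]
      cases τ i with
      | none => simp [srcT]
      | some j =>
        have := hk0 j
        simp [srcT, shiftG]
        omega

/-- The structure on `ℕ × G` given by a relation system. -/
@[reducible] def RelSys.toStr [L.IsRelational] (P : RelSys L G) : L.Structure (ℕ × G) where
  funMap := fun f _ => isEmptyElim f
  RelMap := fun {n} R t => P n R t

theorem term_var [L.IsRelational] {n : ℕ} (t : L.Term (Empty ⊕ Fin n)) :
    ∃ i, t = Term.var (Sum.inr i) := by
  cases t with
  | var x =>
    rcases x with x | i
    · exact x.elim
    · exact ⟨i, rfl⟩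
  | func f _ => exact isEmptyElim f

theorem qf_transfer [L.IsRelational] {M N : Type} [L.Structure M] [L.Structure N] {n : ℕ}
    (t : Fin n → M) (w : Fin n → N) (h1 : ∀ i j, w i = w j ↔ t i = t j)
    (h2 : ∀ (m : ℕ) (R : L.Relations m) (τ : Fin m → Fin n),
      Structure.RelMap R (t ∘ τ) ↔ Structure.RelMap R (w ∘ τ))
    (v : Empty → M) (v' : Empty → N)
    (ψ : L.BoundedFormula Empty n) (hψ : ψ.IsQF) : ψ.Realize v t ↔ ψ.Realize v' w := by
  induction hψ with
  | falsum => exact Iff.rfl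
  | of_isAtomic h =>
    cases h with
    | equal t₁ t₂ =>
      obtain ⟨i, rfl⟩ := term_var t₁
      obtain ⟨j, rfl⟩ := term_var t₂
      simp [h1]
    | rel R ts =>
      choose τ hτ using fun i => term_var (ts i)
      obtain rfl : ts = fun i => Term.var (Sum.inr (τ i)) := funext hτ
      simpa [BoundedFormula.realize_rel, Function.comp_def] using h2 _ R τ
  | imp _ _ ih1 ih2 =>
    rw [BoundedFormula.realize_imp, BoundedFormula.realize_imp, ih1, ih2]

theorem realize_local [L.IsRelational] {M : Type} [L.Structure M] {m : ℕ} (R : L.Relations m)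
    (ψ : L.BoundedFormula Empty m) :
    M ⊨ (BoundedFormula.alls
      ((Relations.boundedFormula R fun k => Term.var (Sum.inr k)).imp ψ) : L.Sentence) ↔
    ∀ t : Fin m → M, Structure.RelMap R t → ψ.Realize default t := by
  refine BoundedFormula.realize_alls.trans ?_
  simp [BoundedFormula.realize_imp, BoundedFormula.realize_rel]

/-- Members of the age satisfy local axioms, hence so does `F`. -/
theorem limit_models [L.IsRelational] (Φ : L.Theory) (hΦ : ∀ φ ∈ Φ, IsLocalSentence φ)
    (hage : L.age F = toBundled L { A : FinStruc L | ∀ φ ∈ Φ, A.Sat φ }) (φ : L.Sentence)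
    (hφ : φ ∈ Φ) : F ⊨ φ := by
  obtain ⟨m, -, R, ψ, hψ, rfl⟩ := hΦ φ hφ
  rw [realize_local]
  intro t ht
  let S : L.Substructure F := Substructure.closure L (Set.range t)
  have hS : (⟨S, inferInstance⟩ : CategoryTheory.Bundled L.Structure) ∈ L.age F :=
    ⟨(Substructure.fg_iff_structure_fg S).1 (Substructure.fg_closure (Set.finite_range t)),
      ⟨S.subtype⟩⟩
  rw [hage] at hS
  obtain ⟨A, hA, ⟨f⟩⟩ := hS
  have hAs := hA _ hφ
  rw [FinStruc.Sat, realize_local] at hAs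
  let t' : Fin m → S := fun i => ⟨t i, Substructure.subset_closure ⟨i, rfl⟩⟩
  have h3 : ∀ (m' : ℕ) (R : L.Relations m') (τ : Fin m' → Fin m),
      Structure.RelMap R ((f ∘ t') ∘ τ) ↔ Structure.RelMap R (t ∘ τ) := fun m' R τ =>
    (f.map_rel R (t' ∘ τ)).trans (S.subtype.map_rel R (t' ∘ τ)).symm
  refine (qf_transfer (f ∘ t') t ?_ h3 default default ψ hψ).1 (hAs _ ?_)
  · intro i j
    simp only [Function.comp, f.injective.eq_iff, t', Subtype.mk.injEq]
  · exact (h3 m R id).2 ht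

theorem limT_models [L.IsRelational] (P : RelSys L G) (hP : LocF F P) (φ : L.Sentence)
    (hφ : IsLocalSentence φ) (hF : F ⊨ φ) :
    @Sentence.Realize L (ℕ × G) P.toStr φ := by
  letI := P.toStr
  obtain ⟨m, -, R, ψ, hψ, rfl⟩ := hφ
  rw [realize_local] at hF
  refine (realize_local R ψ).2 fun t ht => ?_
  obtain ⟨w, hw1, hw2⟩ := hP m R t ht
  exact (qf_transfer t w hw1 hw2 default default ψ hψ).2 (hF w ((hw2 m R id).1 ht))

theorem sub_models [L.IsRelational] {M N : Type} [L.Structure M] [L.Structure N] (f : N ↪[L] M)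
    (φ : L.Sentence) (hφ : IsLocalSentence φ) (hM : M ⊨ φ) : N ⊨ φ := by
  obtain ⟨m, -, R, ψ, hψ, rfl⟩ := hφ
  rw [realize_local] at hM ⊢
  intro t ht
  refine (qf_transfer t (f ∘ t) ?_ ?_ default default ψ hψ).2 (hM _ ((f.map_rel R t).2 ht))
  · intro i j
    exact f.injective.eq_iff
  · exact fun m R τ => (f.map_rel R (t ∘ τ)).symm

/-- The structure on `{0, …, n - 1}` transported along a bijection. -/
def finOf (N : Type) [L.Structure N] {n : ℕ} (c : N ≃ Fin n) : FinStruc L where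
  carrier := Finset.range n
  rel := fun m R => { t | ∃ s : Fin m → N, Structure.RelMap R s ∧ t = fun i => (c (s i) : ℕ) }
  rel_mem := by
    rintro m R t ⟨s, -, rfl⟩ i
    simp

/-- A finite model of the local axioms embeds into the limit. -/
theorem finite_embeds [L.IsRelational] (Φ : L.Theory) (hΦ : ∀ φ ∈ Φ, IsLocalSentence φ)
    (hage : L.age F = toBundled L { A : FinStruc L | ∀ φ ∈ Φ, A.Sat φ })
    (N : Type) [L.Structure N] [Finite N] (hN : ∀ φ ∈ Φ, N ⊨ φ) : Nonempty (N ↪[L] F) := by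
  obtain ⟨n, ⟨c⟩⟩ := Finite.exists_equiv_fin N
  obtain ⟨A, hA⟩ : ∃ A : FinStruc L, A = finOf N c := ⟨_, rfl⟩
  let f : N ≃[L] {x : ℕ // x ∈ A.carrier} :=
    { toFun := fun x => ⟨c x, by simp [hA, finOf]⟩
      invFun := fun x => c.symm ⟨x.1, by simpa [hA, finOf] using x.2⟩
      left_inv := fun x => by simp
      right_inv := fun x => by simp
      map_fun' := fun f => isEmptyElim f
      map_rel' := by
        intro m R t
        subst hA
        constructor
        · rintro ⟨s, hs, heq⟩
          have : t = s := funext fun i => c.injective (Fin.ext (congrFun heq i))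
          rwa [this]
        · exact fun h => ⟨t, h, rfl⟩ }
  have : (⟨N, inferInstance⟩ : CategoryTheory.Bundled L.Structure) ∈ L.age F := by
    rw [hage]
    exact ⟨A, fun φ hφ => sub_models f.symm.toEmbedding φ (hΦ φ hφ) (hN φ hφ), ⟨f⟩⟩
  exact this.2

theorem ext_forth [L.IsRelational] {M : Type} [L.Structure M]
    (hu : L.IsUltrahomogeneous F)
    (hM : ∀ S : L.Substructure M, S.FG → Nonempty (S ↪[L] F)) : L.IsExtensionPair M F := by
  rw [isExtensionPair_iff_exists_embedding_closure_singleton_sup]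
  intro S hS f m
  exact hu.extend_embedding (S.fg_iff_structure_fg.1 hS) f _
    (h := hM _ ((Substructure.fg_closure_singleton m).sup hS))

theorem ext_back [L.IsRelational] (e : ℕ → PTask F G) (he : ∀ T k, ∃ j, k ≤ j ∧ e j = T) :
    @IsExtensionPair L F (ℕ × G) _ (limT (L := L) e).toStr := by
  letI := (limT (L := L) e).toStr
  rw [isExtensionPair_iff_exists_embedding_closure_singleton_sup]
  intro S hS f b
  have hmem : ∀ x, x ∈ (Substructure.closure L {b} ⊔ S : L.Substructure F) → x ∉ S → x = b := by
    intro x hx hxS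
    have : (Substructure.closure L {b} ⊔ S : L.Substructure F) =
        Substructure.closure L ({b} ∪ (S : Set F)) := by
      rw [Substructure.closure_union, Substructure.closure_eq]
    rw [this, Substructure.mem_closure_iff_of_isRelational] at hx
    rcases hx with h | h
    · exact h
    · exact absurd h hxS
  by_cases hb : b ∈ S
  · have hle : Substructure.closure L {b} ⊔ S ≤ S := by
      rw [sup_le_iff, Substructure.closure_le]
      simpa using hb
    refine ⟨f.comp (Substructure.inclusion hle), ?_⟩
    ext x <;> rfl
  · haveI := hS.finite
    obtain ⟨n, ⟨c⟩⟩ := Finite.exists_equiv_fin S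
    obtain ⟨s', hinj, hs', hrel⟩ := limT_ext e he (fun i => f (c.symm i))
      (fun i => (c.symm i : F)) b (f.injective.comp c.symm.injective)
      (Subtype.val_injective.comp c.symm.injective)
      (fun i h => hb (h ▸ (c.symm i).2))
      (fun m R τ => (f.map_rel R (fun i => c.symm (τ i))).trans
        (S.subtype.map_rel R (fun i => c.symm (τ i))).symm)
    classical
    let q : (Substructure.closure L {b} ⊔ S : L.Substructure F) → Option (Fin n) := fun x =>
      if h : x.1 ∈ S then some (c ⟨x.1, h⟩) else none
    have hq : ∀ x, (q x).elim b (fun i => (c.symm i : F)) = x.1 := by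
      intro x
      by_cases h : x.1 ∈ S
      · simp [q, h]
      · have hqx : q x = none := dif_neg h
        rw [hqx, hmem x.1 x.2 h]
        rfl
    have hqi : Function.Injective q := by
      intro x y h
      apply Subtype.ext
      rw [← hq x, ← hq y, h]
    refine ⟨⟨⟨s' ∘ q, hinj.comp hqi⟩, fun g => isEmptyElim g, ?_⟩, ?_⟩
    · intro m R x
      refine (hrel m R (q ∘ x)).trans ?_
      have : (fun o => Option.elim o b fun i => (c.symm i : F)) ∘ q ∘ x = fun i => (x i).1 :=
        funext fun i => hq (x i)
      rw [this]
      exact Iff.rfl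
    · refine Embedding.ext fun x => ?_
      show f x = s' (q _)
      have : q (Substructure.inclusion le_sup_right x) = some (c x) := by
        simp [q]
      rw [this, hs']
      simp

end Helpers

/-- Every direct limit of a sequence of injections of finite groups (equivalently, every union
of an increasing chain of finite subgroups) acts on the Fraïssé limit of a local class with
symmetric relations by automorphisms, with trivial stabilizers. -/
theorem statement_17 (L : FirstOrder.Language.{u, v}) [L.IsRelational]
    [∀ n, Finite (L.Relations n)] [Countable (Σ l, L.Functions l)]
    (K : Set (FinStruc L)) (hK : IsLocalClass K) (hsym : SymmetricClass K)
    (F : Type) [L.Structure F] [Countable F] (hF : IsFraisseLimit (toBundled L K) F)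
    (G : Type) [Group G] (Gn : ℕ → Subgroup G)
    (hfin : ∀ n, (Gn n : Set G).Finite)
    (hmono : ∀ n, Gn n ≤ Gn (n + 1))
    (hunion : ∀ g : G, ∃ n, g ∈ Gn n) :
    ∃ ρ : G → F → F,
      (∀ x : F, ρ 1 x = x) ∧
      (∀ g h : G, ∀ x : F, ρ (g * h) x = ρ g (ρ h x)) ∧
      (∀ g : G, ∀ ⦃n : ℕ⦄ (R : L.Relations n) (t : Fin n → F),
        Structure.RelMap R t ↔ Structure.RelMap R fun i => ρ g (t i)) ∧
      (∀ g : G, ∀ x : F, ρ g x = x → g = 1) := by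
  classical
  obtain ⟨Φ, hΦ, -, rfl⟩ := hK
  rcases isEmpty_or_nonempty F with hE | hne
  · exact ⟨fun _ x => x, fun _ => rfl, fun _ _ _ => rfl, fun _ _ _ _ => Iff.rfl,
      fun _ x => isEmptyElim x⟩
  have hGc : Countable G := by
    have : (Set.univ : Set G) = ⋃ n, (Gn n : Set G) := by
      ext g
      simpa using hunion g
    rw [← Set.countable_univ_iff, this]
    exact Set.countable_iUnion fun n => (hfin n).countable
  obtain ⟨b⟩ := hne
  haveI : Nonempty (PTask F G) := ⟨⟨0, Fin.elim0, Fin.elim0, b⟩⟩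
  obtain ⟨e0, he0⟩ := exists_surjective_nat (PTask F G)
  let e : ℕ → PTask F G := fun k => e0 (Nat.unpair k).1
  have he : ∀ T k, ∃ j, k ≤ j ∧ e j = T := by
    intro T k
    obtain ⟨a, rfl⟩ := he0 T
    exact ⟨Nat.pair a k, Nat.right_le_pair a k, by simp [e]⟩
  letI := (limT (L := L) e).toStr
  have hM : ∀ S : L.Substructure (ℕ × G), S.FG → Nonempty (S ↪[L] F) := by
    intro S hS
    haveI := hS.finite
    refine finite_embeds Φ hΦ hF.age S fun φ hφ => ?_
    exact sub_models S.subtype φ (hΦ φ hφ)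
      (limT_models _ (limT_locF e) φ (hΦ φ hφ) (limit_models Φ hΦ hF.age φ hφ))
  obtain ⟨f0⟩ := hM ⊥ Substructure.fg_bot
  obtain ⟨f, -⟩ := equiv_between_cg (L := L) (M := ℕ × G) (N := F) Structure.cg_of_countable
    Structure.cg_of_countable ⟨⟨⊥, _, f0.equivRange⟩, Substructure.fg_bot⟩
    (ext_forth hF.ultrahomogeneous hM) (ext_back e he)
  refine ⟨fun g x => f (shiftG g (f.symm x)), ?_, ?_, ?_, ?_⟩
  · intro x
    simp [shiftG]
  · intro g h x
    simp [shiftG, mul_assoc]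
  · intro g n R t
    have h1 := f.symm.map_rel R t
    have h2 := limT_shift (L := L) e g R (f.symm ∘ t)
    have h3 := f.map_rel R (shiftG g ∘ (f.symm ∘ t))
    exact h1.symm.trans (h2.symm.trans h3.symm)
  · intro g x h
    have h1 : shiftG g (f.symm x) = f.symm x := by
      apply f.injective
      simpa using h
    simpa [shiftG, Prod.ext_iff] using h1
end

section
/- Let V be a finite set, Δ a simplicial complex on V, v a vertex of Δ, n a natural number, and φ : |Δ| → ℝ^{n+1} a piecewise linear map such that φ(e_v) = (0,…,0,1) and the restriction of φ to the realisation of the induced subcomplex of Δ on V ∖ {v} is a homeomorphism onto the standard (n−1)-simplex. Then there exist a finite set V' ⊇ V, a simplicial complex Δ' on V' whose induced subcomplex on V is Δ, and a piecewise linear map φ' : |Δ'| → ℝ^{n+1} that is a homeomorphism onto the standard n-simplex in ℝ^{n+1} and whose restriction to |Δ| coincides with φ. -/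
/-- The geometric realisation of a simplicial complex `Δ` (a set of finite subsets of `V`): the
union over the faces `F ∈ Δ` of the convex hulls of the corresponding sets of standard basis
vectors in `ℝ^V`. -/
noncomputable def geomReal (V : Type*) [DecidableEq V] (Δ : Set (Finset V)) : Set (V → ℝ) :=
  ⋃ F ∈ Δ, convexHull ℝ ((fun v => Pi.single v (1 : ℝ)) '' (F : Set V))

/-- The topology of the geometric realisation: a set is open if and only if its intersection
with `ℝ^W` (the points supported on `W`) is open for every finite `W ⊆ V`. -/
noncomputable def geomTop (V : Type*) [DecidableEq V] (Δ : Set (Finset V)) :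
    TopologicalSpace (geomReal V Δ) :=
  ⨆ W : Finset V,
    TopologicalSpace.coinduced
      (fun x : { y : geomReal V Δ // ∀ v : V, v ∉ W → (y : V → ℝ) v = 0 } => x.1)
      inferInstance

/-- The piecewise linear map on `ℝ^V` determined by the vertex images `g v`: each point, given
by its barycentric coordinates, is sent to the corresponding affine combination of the vertex
images.  Piecewise linear maps on the realisation of a simplicial complex are exactly the
restrictions of such maps. -/
noncomputable def plMap {V : Type*} {m : ℕ} (g : V → Fin m → ℝ) (x : V → ℝ) : Fin m → ℝ :=
  ∑ᶠ v, x v • g v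

/-- The standard `(k-1)`-simplex inside `ℝ^m`: the convex hull of the first `k` standard basis
vectors. -/
noncomputable def stdSimplexIn (m k : ℕ) : Set (Fin m → ℝ) :=
  convexHull ℝ { p : Fin m → ℝ | ∃ i : Fin m, (i : ℕ) < k ∧ p = Pi.single i 1 }

/-- `Δ` is a simplicial complex on the finite vertex set `s`: all faces are subsets of `s` and
faces are closed under taking subsets. -/
def IsComplexOn (V : Type*) (s : Finset V) (Δ : Set (Finset V)) : Prop :=
  (∀ F ∈ Δ, F ⊆ s) ∧ ∀ F ∈ Δ, ∀ G ⊆ F, G ∈ Δ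

open Set in
lemma mem_geomReal_iff (K : Set (Finset ℕ)) (x : ℕ → ℝ) :
    x ∈ geomReal ℕ K ↔ ∃ F ∈ K, (∀ w, 0 ≤ x w) ∧ (∀ w, w ∉ F → x w = 0) ∧ ∑ w ∈ F, x w = 1 := by
  unfold geomReal
  simp only [mem_iUnion, exists_prop]
  refine exists_congr fun F => and_congr_right fun _ => ?_
  constructor
  · intro h
    have hsub : convexHull ℝ ((fun v => Pi.single v (1 : ℝ)) '' (F : Set ℕ)) ⊆
        {x : ℕ → ℝ | (∀ w, 0 ≤ x w) ∧ (∀ w, w ∉ F → x w = 0) ∧ ∑ w ∈ F, x w = 1} := by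
      apply convexHull_min
      · rintro _ ⟨u, hu, rfl⟩
        have hu' : u ∈ F := hu
        refine ⟨fun w => ?_, fun w hw => ?_, ?_⟩
        · by_cases h : w = u
          · subst h; simp
          · simp [h]
        · have : w ≠ u := by rintro rfl; exact hw hu'
          simp [this]
        · simp [Finset.sum_pi_single', hu', Pi.single_apply]
      · intro p hp q hq a c ha hc hac
        refine ⟨fun w => ?_, fun w hw => ?_, ?_⟩
        · have := hp.1 w; have := hq.1 w
          simp only [Pi.add_apply, Pi.smul_apply, smul_eq_mul]; positivity
        · simp [hp.2.1 w hw, hq.2.1 w hw]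
        · simp only [Pi.add_apply, Pi.smul_apply, smul_eq_mul]
          rw [Finset.sum_add_distrib, ← Finset.mul_sum, ← Finset.mul_sum, hp.2.2, hq.2.2]
          linarith
    exact hsub h
  · rintro ⟨h0, h1, h2⟩
    have hx : x = ∑ w ∈ F, x w • (Pi.single w (1 : ℝ) : ℕ → ℝ) := by
      ext u
      rw [Finset.sum_apply]
      by_cases hu : u ∈ F
      · simp [Pi.single_apply, hu]
      · simp [Pi.single_apply, hu, h1 u hu]
    rw [hx]
    apply Convex.sum_mem (convex_convexHull ℝ _) (fun i _ => h0 i) h2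
    intro i hi
    exact subset_convexHull ℝ _ ⟨i, hi, rfl⟩

lemma mem_geomReal_iff' {K : Set (Finset ℕ)} {S : Finset ℕ} (hK : ∀ F ∈ K, F ⊆ S) (x : ℕ → ℝ) :
    x ∈ geomReal ℕ K ↔ (∀ w, 0 ≤ x w) ∧ ∑ w ∈ S, x w = 1 ∧ ∃ F ∈ K, ∀ w, w ∉ F → x w = 0 := by
  rw [mem_geomReal_iff]
  constructor
  · rintro ⟨F, hF, h0, h1, h2⟩
    refine ⟨h0, ?_, F, hF, h1⟩
    rw [← h2]
    exact (Finset.sum_subset (hK F hF) (fun w _ hw => h1 w hw)).symm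
  · rintro ⟨h0, h2, F, hF, h1⟩
    refine ⟨F, hF, h0, h1, ?_⟩
    rw [← h2]
    exact (Finset.sum_subset (hK F hF) (fun w _ hw => h1 w hw))

lemma mem_simplex_iff (m k : ℕ) (y : Fin m → ℝ) :
    y ∈ stdSimplexIn m k ↔ (∀ i, 0 ≤ y i) ∧ ∑ i, y i = 1 ∧ ∀ i : Fin m, k ≤ (i : ℕ) → y i = 0 := by
  unfold stdSimplexIn
  constructor
  · intro h
    have hsub : convexHull ℝ { p : Fin m → ℝ | ∃ i : Fin m, (i : ℕ) < k ∧ p = Pi.single i 1 } ⊆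
        {y | (∀ i, 0 ≤ y i) ∧ ∑ i, y i = 1 ∧ ∀ i : Fin m, k ≤ (i : ℕ) → y i = 0} := by
      apply convexHull_min
      · rintro _ ⟨u, hu, rfl⟩
        refine ⟨fun w => ?_, ?_, fun w hw => ?_⟩
        · by_cases h : w = u
          · subst h; simp
          · simp [h]
        · simp
        · have : w ≠ u := by rintro rfl; omega
          simp [this]
      · intro p hp q hq a c ha hc hac
        refine ⟨fun w => ?_, ?_, fun w hw => ?_⟩
        · have := hp.1 w; have := hq.1 w
          simp only [Pi.add_apply, Pi.smul_apply, smul_eq_mul]; positivity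
        · simp only [Pi.add_apply, Pi.smul_apply, smul_eq_mul]
          rw [Finset.sum_add_distrib, ← Finset.mul_sum, ← Finset.mul_sum, hp.2.1, hq.2.1]
          linarith
        · simp [hp.2.2 w hw, hq.2.2 w hw]
    exact hsub h
  · rintro ⟨h0, h1, h2⟩
    have hx : y = ∑ w ∈ Finset.univ.filter (fun i : Fin m => (i : ℕ) < k),
        y w • (Pi.single w (1 : ℝ) : Fin m → ℝ) := by
      ext u
      rw [Finset.sum_apply]
      by_cases hu : (u : ℕ) < k
      · simp [Pi.single_apply, hu]
      · simp [Pi.single_apply, hu, h2 u (not_lt.mp hu)]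
    rw [hx]
    apply Convex.sum_mem (convex_convexHull ℝ _) (fun i _ => h0 i)
    · rw [← h1]
      apply Finset.sum_subset (Finset.subset_univ _)
      intro i _ hi
      apply h2
      simpa using hi
    · intro i hi
      exact subset_convexHull ℝ _ ⟨i, by simpa using hi, rfl⟩

lemma plMap_eq {m : ℕ} (g : ℕ → Fin m → ℝ) (x : ℕ → ℝ) (S : Finset ℕ)
    (h : ∀ w, w ∉ S → x w = 0) : plMap g x = ∑ w ∈ S, x w • g w := by
  unfold plMap
  apply finsum_eq_sum_of_support_subset
  intro w hw
  by_contra hn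
  exact hw (by simp [h w hn])

lemma geomTop_eq (K : Set (Finset ℕ)) (S : Finset ℕ) (hK : ∀ F ∈ K, F ⊆ S) :
    geomTop ℕ K = (inferInstance : TopologicalSpace (geomReal ℕ K)) := by
  have hS : ∀ y : geomReal ℕ K, ∀ v, v ∉ S → (y : ℕ → ℝ) v = 0 := by
    rintro ⟨y, hy⟩ w hw
    obtain ⟨F, hF, _, h1, _⟩ := (mem_geomReal_iff K y).1 hy
    exact h1 w (fun h => hw (hK F hF h))
  unfold geomTop
  apply le_antisymm
  · apply iSup_le
    intro W
    rw [← continuous_iff_coinduced_le]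
    exact continuous_subtype_val
  · refine le_trans ?_ (le_iSup _ S)
    intro U hU
    rw [isOpen_coinduced] at hU
    have hc : Continuous (fun y : geomReal ℕ K =>
      (⟨y, hS y⟩ : { y : geomReal ℕ K // ∀ v : ℕ, v ∉ S → (y : ℕ → ℝ) v = 0 })) :=
      Continuous.subtype_mk continuous_id _
    exact hU.preimage hc

lemma geomReal_compact (K : Set (Finset ℕ)) (S : Finset ℕ) (hK : ∀ F ∈ K, F ⊆ S) :
    IsCompact (geomReal ℕ K) := by
  unfold geomReal
  have hfin : K.Finite := (S.powerset.finite_toSet).subset (fun F hF => by simpa using hK F hF)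
  apply hfin.isCompact_biUnion
  intro F _
  exact ((F.finite_toSet).image _).isCompact_convexHull (𝕜 := ℝ)

lemma homeo_of_bijOn {m : ℕ} (K : Set (Finset ℕ)) (S : Finset ℕ) (hK : ∀ F ∈ K, F ⊆ S)
    (g : ℕ → Fin m → ℝ) (T : Set (Fin m → ℝ)) (hb : Set.BijOn (plMap g) (geomReal ℕ K) T) :
    ∃ e : @Homeomorph (geomReal ℕ K) T (geomTop ℕ K) inferInstance,
      ∀ x : geomReal ℕ K, (e x : Fin m → ℝ) = plMap g (x : ℕ → ℝ) := by
  rw [geomTop_eq K S hK]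
  haveI : CompactSpace (geomReal ℕ K) := isCompact_iff_compactSpace.1 (geomReal_compact K S hK)
  have hc : Continuous (hb.equiv (plMap g)) := by
    apply Continuous.subtype_mk
    have : (fun x : geomReal ℕ K => plMap g (x : ℕ → ℝ)) =
        fun x : geomReal ℕ K => ∑ w ∈ S, (x : ℕ → ℝ) w • g w := by
      ext1 x
      apply plMap_eq
      intro w hw
      obtain ⟨F, hF, _, h1, _⟩ := (mem_geomReal_iff K x).1 x.2
      exact h1 w (fun h => hw (hK F hF h))
    show Continuous (fun x : geomReal ℕ K => plMap g (x : ℕ → ℝ))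
    rw [this]
    refine continuous_finsetSum _ fun w _ => ?_
    exact ((continuous_apply w).comp continuous_subtype_val).smul continuous_const
  exact ⟨hc.homeoOfEquivCompactToT2, fun x => rfl⟩

/-- Stellar subdivision at `G` with new vertex `b`. -/
def stellar (K : Set (Finset ℕ)) (G : Finset ℕ) (b : ℕ) : Set (Finset ℕ) :=
  {F | ¬ G ⊆ F ∧ (F ∈ K ∨ (b ∈ F ∧ F.erase b ∪ G ∈ K))}

/-- The subdivision map. -/
noncomputable def stMap (G : Finset ℕ) (b : ℕ) (x : ℕ → ℝ) : ℕ → ℝ :=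
  fun w => if w = b then 0 else if w ∈ G then x w + x b / G.card else x w

lemma stellar_complex {K : Set (Finset ℕ)} {S G : Finset ℕ} {b : ℕ} (hK : IsComplexOn ℕ S K) :
    IsComplexOn ℕ (insert b S) (stellar K G b) := by
  constructor
  · rintro F ⟨_, hF | ⟨_, hF⟩⟩
    · exact (hK.1 F hF).trans (Finset.subset_insert _ _)
    · have := hK.1 _ hF
      intro w hw
      by_cases h : w = b
      · simp [h]
      · exact Finset.mem_insert_of_mem (this (by simp [hw, h]))
  · rintro F ⟨h, hF⟩ H hH
    refine ⟨fun h' => h (h'.trans hH), ?_⟩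
    rcases hF with hF | ⟨hb, hF⟩
    · exact Or.inl (hK.2 F hF H hH)
    · by_cases hbH : b ∈ H
      · refine Or.inr ⟨hbH, hK.2 _ hF _ ?_⟩
        exact Finset.union_subset_union_left (Finset.erase_subset_erase _ hH)
      · refine Or.inl (hK.2 _ hF _ ?_)
        intro w hw
        have : w ≠ b := by rintro rfl; exact hbH hw
        simp [this, hH hw]

lemma stMap_sum {S G : Finset ℕ} {b : ℕ} (hG : G ⊆ S) (hne : G.Nonempty) (hb : b ∉ S)
    {E : Type*} [AddCommGroup E] [Module ℝ E] (f : ℕ → E) (x : ℕ → ℝ) :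
    ∑ w ∈ S, stMap G b x w • f w =
      ∑ w ∈ S, x w • f w + x b • ((G.card : ℝ)⁻¹ • ∑ w ∈ G, f w) := by
  have h1 : ∀ w ∈ S, stMap G b x w • f w = x w • f w + (if w ∈ G then (x b / G.card) • f w else 0) := by
    intro w hw
    have : w ≠ b := by rintro rfl; exact hb hw
    by_cases hwG : w ∈ G <;> simp [stMap, this, hwG, add_smul]
  rw [Finset.sum_congr rfl h1, Finset.sum_add_distrib, Finset.sum_ite_mem,
    Finset.inter_eq_right.2 hG, ← Finset.smul_sum, smul_smul, div_eq_mul_inv]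

lemma stMap_sum1 {S G : Finset ℕ} {b : ℕ} (hG : G ⊆ S) (hne : G.Nonempty) (hb : b ∉ S)
    (x : ℕ → ℝ) :
    ∑ w ∈ S, stMap G b x w = ∑ w ∈ insert b S, x w := by
  have := stMap_sum hG hne hb (fun _ => (1 : ℝ)) x
  have hc : (G.card : ℝ) ≠ 0 := by exact_mod_cast hne.card_ne_zero
  simp [hc] at this
  rw [this, Finset.sum_insert hb, add_comm]

lemma stMap_bijOn {K : Set (Finset ℕ)} {S G : Finset ℕ} {b : ℕ} (hK : IsComplexOn ℕ S K)
    (hG : G ∈ K) (hne : G.Nonempty) (hb : b ∉ S) :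
    Set.BijOn (stMap G b) (geomReal ℕ (stellar K G b)) (geomReal ℕ K) := by
  have hGS := hK.1 G hG
  have hbG : b ∉ G := fun h => hb (hGS h)
  have hc : (0 : ℝ) < G.card := by exact_mod_cast hne.card_pos
  have hst := stellar_complex (G := G) (b := b) hK
  refine ⟨?_, ?_, ?_⟩
  · intro x hx
    rw [mem_geomReal_iff' hst.1] at hx
    rw [mem_geomReal_iff' hK.1]
    obtain ⟨h0, hs, F, ⟨hF1, hF2⟩, h1⟩ := hx
    refine ⟨fun w => ?_, by rw [stMap_sum1 hGS hne hb, hs], ?_⟩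
    · have := h0 w; have := h0 b
      unfold stMap; split_ifs <;> positivity
    · rcases hF2 with hF | ⟨hbF, hF⟩
      · refine ⟨F, hF, fun w hw => ?_⟩
        have : x b = 0 := h1 b (fun h => hb (hK.1 F hF h))
        simp [stMap, this, h1 w hw]
      · refine ⟨_, hF, fun w hw => ?_⟩
        simp only [Finset.mem_union, Finset.mem_erase, not_or, not_and] at hw
        by_cases hwb : w = b
        · simp [stMap, hwb]
        · simp [stMap, hwb, hw.2, h1 w (hw.1 hwb)]
  · have key : ∀ x ∈ geomReal ℕ (stellar K G b), ∀ x' ∈ geomReal ℕ (stellar K G b),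
        stMap G b x = stMap G b x' → x b ≤ x' b := by
      intro x hx x' hx' hxx
      rw [mem_geomReal_iff' hst.1] at hx hx'
      obtain ⟨h0, -, -⟩ := hx
      obtain ⟨-, -, F, ⟨hF1, -⟩, h1⟩ := hx'
      obtain ⟨w, hwG, hwF⟩ := Finset.not_subset.1 hF1
      have hwb : w ≠ b := by rintro rfl; exact hbG hwG
      have := congrFun hxx w
      simp only [stMap, hwb, hwG, if_true, if_false, h1 w hwF] at this
      have h3 : x b / G.card ≤ x' b / G.card := by linarith [h0 w]
      exact (div_le_div_iff_of_pos_right hc).1 h3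
    intro x hx x' hx' hxx
    have hb' : x b = x' b := le_antisymm (key x hx x' hx' hxx) (key x' hx' x hx hxx.symm)
    ext w
    by_cases hwb : w = b
    · rw [hwb, hb']
    · have := congrFun hxx w
      by_cases hwG : w ∈ G <;> simpa [stMap, hwb, hwG, hb'] using this
  · intro y hy
    rw [mem_geomReal_iff' hK.1] at hy
    obtain ⟨h0, hs, H, hH, h1⟩ := hy
    obtain ⟨w0, hw0, hmin⟩ := Finset.exists_min_image G y hne
    have hw0b : w0 ≠ b := by rintro rfl; exact hbG hw0
    have hyb : y b = 0 := h1 b (fun h => hb (hK.1 H hH h))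
    let x : ℕ → ℝ := fun w => if w = b then y w0 * G.card else if w ∈ G then y w - y w0 else y w
    have hxy : stMap G b x = y := by
      ext w
      by_cases hwb : w = b
      · simp [stMap, hwb, hyb]
      · by_cases hwG : w ∈ G
        · simp [stMap, x, hwb, hwG, hc.ne']
        · simp [stMap, x, hwb, hwG]
    refine ⟨x, ?_, hxy⟩
    rw [mem_geomReal_iff' hst.1]
    refine ⟨fun w => ?_, by rw [← stMap_sum1 hGS hne hb, hxy, hs], ?_⟩
    · have := h0 w; have := h0 w0
      simp only [x]
      split_ifs with h h'
      · positivity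
      · linarith [hmin w h']
      · assumption
    · by_cases hm : y w0 = 0
      · refine ⟨H.erase w0, ⟨fun h => ?_, Or.inl (hK.2 H hH _ (Finset.erase_subset _ _))⟩, ?_⟩
        · simpa using h hw0
        · intro w hw
          have hyw : y w = 0 := by
            by_cases hww : w = w0
            · rw [hww, hm]
            · exact h1 w (fun h => hw (by simp [hww, h]))
          simp [x, hm, hyw]
      · have hpos : 0 < y w0 := lt_of_le_of_ne (h0 w0) (Ne.symm hm)
        have hGH : G ⊆ H := by
          intro w hw
          by_contra hn
          linarith [hmin w hw, h1 w hn]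
        refine ⟨insert b (H.erase w0), ⟨fun h => ?_, Or.inr ⟨by simp, hK.2 H hH _ ?_⟩⟩, ?_⟩
        · simpa [hw0b] using h hw0
        · apply Finset.union_subset _ hGH
          intro w hw
          simp only [Finset.mem_erase, Finset.mem_insert] at hw
          tauto
        · intro w hw
          simp only [Finset.mem_erase, Finset.mem_insert, not_or, not_and] at hw
          obtain ⟨hwb, hw⟩ := hw
          by_cases hww : w = w0
          · subst hww; simp [x, hwb, hw0]
          · have hwG : w ∉ G := fun h => hw hww (hGH h)
            simp [x, hwb, hwG, h1 w (hw hww)]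

lemma supp_of_mem {K : Set (Finset ℕ)} {S : Finset ℕ} (hK : ∀ F ∈ K, F ⊆ S) {x : ℕ → ℝ}
    (hx : x ∈ geomReal ℕ K) : ∀ w, w ∉ S → x w = 0 := by
  intro w hw
  obtain ⟨F, hF, _, h1, _⟩ := (mem_geomReal_iff K x).1 hx
  exact h1 w (fun h => hw (hK F hF h))

lemma stellar_bijOn {K : Set (Finset ℕ)} {S G : Finset ℕ} {b : ℕ} (hK : IsComplexOn ℕ S K)
    (hG : G ∈ K) (hne : G.Nonempty) (hb : b ∉ S) {m : ℕ} (g : ℕ → Fin m → ℝ)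
    {T : Set (Fin m → ℝ)} (hbij : Set.BijOn (plMap g) (geomReal ℕ K) T) :
    Set.BijOn (plMap (Function.update g b ((G.card : ℝ)⁻¹ • ∑ w ∈ G, g w)))
      (geomReal ℕ (stellar K G b)) T := by
  have h1 := stMap_bijOn hK hG hne hb
  refine (hbij.comp h1).congr ?_
  intro x hx
  have hst := stellar_complex (G := G) (b := b) hK
  simp only [Function.comp]
  rw [plMap_eq _ _ _ (supp_of_mem hst.1 hx), plMap_eq _ _ _ (supp_of_mem hK.1 (h1.mapsTo hx)),
    stMap_sum (hK.1 G hG) hne hb, Finset.sum_insert hb, add_comm]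
  simp only [Function.update_self]
  congr 1
  apply Finset.sum_congr rfl
  intro w hw
  have : w ≠ b := by rintro rfl; exact hb hw
  simp [this]

lemma main_induction (s : Finset ℕ) (Δ : Set (Finset ℕ)) (hΔ : IsComplexOn ℕ s Δ)
    (h0 : ∅ ∈ Δ) {m : ℕ} (g : ℕ → Fin m → ℝ) (T : Set (Fin m → ℝ)) (N : ℕ) :
    ∀ (s' : Finset ℕ) (K : Set (Finset ℕ)) (g' : ℕ → Fin m → ℝ), s ⊆ s' → IsComplexOn ℕ s' K →
      Δ ⊆ K → (∀ w ∈ s, g' w = g w) → Set.BijOn (plMap g') (geomReal ℕ K) T →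
      {F | F ⊆ s ∧ F ∈ K ∧ F ∉ Δ}.ncard ≤ N →
    ∃ (s' : Finset ℕ) (K : Set (Finset ℕ)) (g' : ℕ → Fin m → ℝ), s ⊆ s' ∧ IsComplexOn ℕ s' K ∧
      { F ∈ K | F ⊆ s } = Δ ∧ (∀ w ∈ s, g' w = g w) ∧
      Set.BijOn (plMap g') (geomReal ℕ K) T := by
  have hfin : ∀ K : Set (Finset ℕ), {F | F ⊆ s ∧ F ∈ K ∧ F ∉ Δ}.Finite := fun K =>
    (s.powerset.finite_toSet).subset (fun F hF => by simpa using hF.1)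
  induction N with
  | zero =>
    intro s' K g' hs hK hΔK hg hb hN
    have := (Set.ncard_eq_zero (hfin K)).1 (Nat.le_zero.1 hN)
    refine ⟨s', K, g', hs, hK, ?_, hg, hb⟩
    ext F
    constructor
    · rintro ⟨h1, h2⟩
      by_contra h3
      exact (Set.eq_empty_iff_forall_notMem.1 this F) ⟨h2, h1, h3⟩
    · exact fun h => ⟨hΔK h, hΔ.1 F h⟩
  | succ N ih =>
    intro s' K g' hs hK hΔK hg hb hN
    by_cases hE : {F | F ⊆ s ∧ F ∈ K ∧ F ∉ Δ} = ∅
    · exact ih s' K g' hs hK hΔK hg hb (by rw [hE]; simp)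
    · obtain ⟨G, hGs, hGK, hGΔ⟩ := Set.nonempty_iff_ne_empty.2 hE
      have hne : G.Nonempty := by
        rw [Finset.nonempty_iff_ne_empty]
        rintro rfl
        exact hGΔ h0
      obtain ⟨b, hbs⟩ := Infinite.exists_notMem_finset s'
      refine ih (insert b s') (stellar K G b) _ (hs.trans (Finset.subset_insert _ _))
        (stellar_complex hK) ?_ ?_ (stellar_bijOn hK hGK hne hbs g' hb) ?_
      · intro F hF
        exact ⟨fun h => hGΔ (hΔ.2 F hF G h), Or.inl (hΔK hF)⟩
      · intro w hw
        have : w ≠ b := by rintro rfl; exact hbs (hs hw)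
        simp [this, hg w hw]
      · have : {F | F ⊆ s ∧ F ∈ stellar K G b ∧ F ∉ Δ} ⊂ {F | F ⊆ s ∧ F ∈ K ∧ F ∉ Δ} := by
          refine (Set.ssubset_iff_of_subset ?_).2 ⟨G, ⟨hGs, hGK, hGΔ⟩, ?_⟩
          · rintro F ⟨h1, ⟨-, h2⟩, h3⟩
            refine ⟨h1, ?_, h3⟩
            rcases h2 with h2 | ⟨h2, -⟩
            · exact h2
            · exact absurd (hs (h1 h2)) hbs
          · rintro ⟨-, ⟨h, -⟩, -⟩
            exact h subset_rfl
        have := Set.ncard_lt_ncard this (hfin K)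
        omega

lemma cone_bijOn (s : Finset ℕ) (Δ : Set (Finset ℕ)) (hΔ : IsComplexOn ℕ s Δ)
    (v : ℕ) (hvs : v ∈ s) (n : ℕ) (g : ℕ → Fin (n + 1) → ℝ)
    (hgv : g v = Pi.single (Fin.last n) 1) (h0 : ∅ ∈ Δ)
    (hb : Set.BijOn (plMap g) (geomReal ℕ { F ∈ Δ | v ∉ F }) (stdSimplexIn (n + 1) n)) :
    IsComplexOn ℕ s {F | F.erase v ∈ Δ} ∧
    Set.BijOn (plMap g) (geomReal ℕ {F | F.erase v ∈ Δ}) (stdSimplexIn (n + 1) (n + 1)) := by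
  have hC : IsComplexOn ℕ s {F | F.erase v ∈ Δ} := by
    constructor
    · intro F hF w hw
      by_cases h : w = v
      · rwa [h]
      · exact hΔ.1 _ hF (by simp [h, hw])
    · intro F hF H hH
      exact hΔ.2 _ hF _ (Finset.erase_subset_erase _ hH)
  have hD : ∀ F ∈ { F ∈ Δ | v ∉ F }, F ⊆ s := fun F hF => hΔ.1 F hF.1
  refine ⟨hC, ?_⟩
  -- joining with the apex
  let J : ℝ → (ℕ → ℝ) → (ℕ → ℝ) := fun t z => fun w => if w = v then t else (1 - t) * z w
  have hJpl : ∀ t z, z v = 0 → (∀ w, w ∉ s → z w = 0) →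
      plMap g (J t z) = (1 - t) • plMap g z + t • Pi.single (Fin.last n) 1 := by
    intro t z hzv hz
    rw [plMap_eq g (J t z) s, plMap_eq g z s hz, ← Finset.add_sum_erase _ _ hvs,
      ← Finset.add_sum_erase _ (fun w => z w • g w) hvs, hzv]
    · simp only [J, if_true, hgv, zero_smul, zero_add, Finset.smul_sum]
      refine (add_comm _ _).trans ?_
      congr 1
      apply Finset.sum_congr rfl
      intro w hw
      simp [Finset.ne_of_mem_erase hw, mul_smul]
    · intro w hw
      have : w ≠ v := by rintro rfl; exact hw hvs
      simp [J, this, hz w hw]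
  have hDv : ∀ z ∈ geomReal ℕ { F ∈ Δ | v ∉ F }, z v = 0 := by
    intro z hz
    obtain ⟨F, hF, _, h1, _⟩ := (mem_geomReal_iff _ z).1 hz
    exact h1 v hF.2
  have hJmem : ∀ t z, 0 ≤ t → t ≤ 1 → z ∈ geomReal ℕ { F ∈ Δ | v ∉ F } →
      J t z ∈ geomReal ℕ {F | F.erase v ∈ Δ} := by
    intro t z ht0 ht1 hz
    have hzv := hDv z hz
    rw [mem_geomReal_iff' hD] at hz
    rw [mem_geomReal_iff' hC.1]
    obtain ⟨z0, z1, F, hF, z2⟩ := hz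
    refine ⟨fun w => ?_, ?_, insert v F, ?_, fun w hw => ?_⟩
    · simp only [J]
      split_ifs
      · exact ht0
      · exact mul_nonneg (by linarith) (z0 w)
    · rw [← Finset.add_sum_erase _ _ hvs] at z1 ⊢
      rw [hzv, zero_add] at z1
      have : ∑ w ∈ s.erase v, J t z w = ∑ w ∈ s.erase v, (1 - t) * z w := by
        apply Finset.sum_congr rfl
        intro w hw
        simp [J, Finset.ne_of_mem_erase hw]
      rw [this, ← Finset.mul_sum, z1]
      simp [J]
    · show (insert v F).erase v ∈ Δ
      rw [Finset.erase_insert hF.2]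
      exact hF.1
    · simp only [Finset.mem_insert, not_or] at hw
      simp [J, hw.1, z2 w hw.2]
  have hdecomp : ∀ x ∈ geomReal ℕ {F | F.erase v ∈ Δ}, 0 ≤ x v ∧ x v ≤ 1 ∧
      ((x v = 1 ∧ x = Pi.single v 1) ∨
        (x v < 1 ∧ ∃ z ∈ geomReal ℕ { F ∈ Δ | v ∉ F }, x = J (x v) z)) := by
    intro x hx
    rw [mem_geomReal_iff' hC.1] at hx
    obtain ⟨x0, x1, F, hF, x2⟩ := hx
    rw [← Finset.add_sum_erase _ _ hvs] at x1
    have hnn : 0 ≤ ∑ w ∈ s.erase v, x w := Finset.sum_nonneg (fun w _ => x0 w)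
    have hle : x v ≤ 1 := by linarith
    refine ⟨x0 v, hle, ?_⟩
    rcases hle.eq_or_lt with h | h
    · refine Or.inl ⟨h, ?_⟩
      have hz : ∑ w ∈ s.erase v, x w = 0 := by linarith
      rw [Finset.sum_eq_zero_iff_of_nonneg (fun w _ => x0 w)] at hz
      ext w
      by_cases hw : w = v
      · subst hw; simp [h]
      · by_cases hws : w ∈ s
        · simp [hw, hz w (by simp [hw, hws])]
        · simp [hw, x2 w (fun h => hws (hC.1 F hF h))]
    · refine Or.inr ⟨h, fun w => if w = v then 0 else (1 - x v)⁻¹ * x w, ?_, ?_⟩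
      · rw [mem_geomReal_iff' hD]
        have hp : 0 < 1 - x v := by linarith
        refine ⟨fun w => ?_, ?_, F.erase v, ⟨hF, by simp⟩, fun w hw => ?_⟩
        · have := x0 w
          split_ifs <;> positivity
        · rw [← Finset.add_sum_erase _ _ hvs]
          have : ∑ w ∈ s.erase v, (if w = v then 0 else (1 - x v)⁻¹ * x w) =
              ∑ w ∈ s.erase v, (1 - x v)⁻¹ * x w := by
            apply Finset.sum_congr rfl
            intro w hw
            simp [Finset.ne_of_mem_erase hw]
          rw [this, ← Finset.mul_sum]
          have : ∑ w ∈ s.erase v, x w = 1 - x v := by linarith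
          rw [this]
          simp [hp.ne']
        · by_cases hwv : w = v
          · simp [hwv]
          · simp [hwv, x2 w (fun h => hw (by simp [hwv, h]))]
      · have hp : 1 - x v ≠ 0 := by linarith
        ext w
        by_cases hwv : w = v
        · simp [J, hwv]
        · simp [J, hwv, hp]
  have hpv : plMap g (Pi.single v 1) = Pi.single (Fin.last n) 1 := by
    rw [plMap_eq g _ {v}]
    · simp [hgv]
    · intro w hw
      have : w ≠ v := by simpa using hw
      simp [this]
  have hlast : ∀ x ∈ geomReal ℕ {F | F.erase v ∈ Δ}, plMap g x (Fin.last n) = x v := by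
    intro x hx
    obtain ⟨-, -, ⟨h, h'⟩ | ⟨h, z, hz, h'⟩⟩ := hdecomp x hx
    · rw [h, h', hpv]; simp
    · rw [h', hJpl _ z (hDv z hz) (supp_of_mem hD hz)]
      have := ((mem_simplex_iff _ _ _).1 (hb.mapsTo hz)).2.2 (Fin.last n) (by simp)
      simp [this, J]
  refine ⟨?_, ?_, ?_⟩
  · intro x hx
    obtain ⟨t0, t1, ⟨h, h'⟩ | ⟨h, z, hz, h'⟩⟩ := hdecomp x hx
    · rw [h', hpv]
      exact subset_convexHull ℝ _ ⟨Fin.last n, by simp, rfl⟩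
    · rw [h', hJpl _ z (hDv z hz) (supp_of_mem hD hz)]
      have hsub : stdSimplexIn (n + 1) n ⊆ stdSimplexIn (n + 1) (n + 1) := by
        apply convexHull_mono
        rintro p ⟨i, hi, rfl⟩
        exact ⟨i, by omega, rfl⟩
      apply convex_convexHull ℝ _ (hsub (hb.mapsTo hz))
        (subset_convexHull ℝ _ ⟨Fin.last n, by simp, rfl⟩) (by linarith) t0 (by ring)
  · intro x hx x' hx' hxx
    have hvv : x v = x' v := by rw [← hlast x hx, ← hlast x' hx', hxx]
    obtain ⟨-, -, ⟨h, h'⟩ | ⟨h, z, hz, h'⟩⟩ := hdecomp x hx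
    · obtain ⟨-, -, ⟨k, k'⟩ | ⟨k, z, hz, k'⟩⟩ := hdecomp x' hx'
      · rw [h', k']
      · linarith
    · obtain ⟨-, -, ⟨k, k'⟩ | ⟨k, z', hz', k'⟩⟩ := hdecomp x' hx'
      · linarith
      · rw [← hvv] at k'
        have hp : 1 - x v ≠ 0 := by linarith
        have e1 := hJpl (x v) z (hDv z hz) (supp_of_mem hD hz)
        have e2 := hJpl (x v) z' (hDv z' hz') (supp_of_mem hD hz')
        rw [← h'] at e1
        rw [← k', ← hxx, e1] at e2
        have e3 := smul_right_injective _ hp (add_right_cancel e2)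
        rw [h', k', hb.injOn hz hz' e3]
  · intro y hy
    rw [mem_simplex_iff] at hy
    obtain ⟨y0, y1, -⟩ := hy
    rw [Fin.sum_univ_castSucc] at y1
    have hnn : 0 ≤ ∑ i : Fin n, y i.castSucc := Finset.sum_nonneg (fun i _ => y0 _)
    have hle : y (Fin.last n) ≤ 1 := by linarith
    rcases hle.eq_or_lt with h | h
    · refine ⟨Pi.single v 1, ?_, ?_⟩
      · rw [mem_geomReal_iff]
        refine ⟨{v}, by simpa using h0, fun w => ?_, fun w hw => ?_, by simp⟩
        · by_cases hw : w = v
          · subst hw; simp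
          · simp [hw]
        · have : w ≠ v := by simpa using hw
          simp [this]
      · rw [hpv]
        have hz : ∑ i : Fin n, y i.castSucc = 0 := by linarith
        rw [Finset.sum_eq_zero_iff_of_nonneg (fun w _ => y0 _)] at hz
        ext i
        refine Fin.lastCases ?_ (fun i => ?_) i
        · simp [h]
        · simp [hz i (Finset.mem_univ _), (Fin.castSucc_lt_last i).ne]
    · set t := y (Fin.last n) with ht
      have hp : 0 < 1 - t := by linarith
      let u : Fin (n + 1) → ℝ := fun i => if i = Fin.last n then 0 else (1 - t)⁻¹ * y i
      have hu : u ∈ stdSimplexIn (n + 1) n := by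
        rw [mem_simplex_iff]
        refine ⟨fun i => ?_, ?_, fun i hi => ?_⟩
        · have := y0 i
          simp only [u]; split_ifs <;> positivity
        · rw [Fin.sum_univ_castSucc]
          simp only [u, (Fin.castSucc_lt_last _).ne, if_true, if_false, add_zero]
          rw [← Finset.mul_sum]
          have : ∑ i : Fin n, y i.castSucc = 1 - t := by linarith
          rw [this]; simp [hp.ne']
        · have : i = Fin.last n := by ext; simp; omega
          simp [u, this]
      obtain ⟨z, hz, hzu⟩ := hb.surjOn hu
      refine ⟨J t z, hJmem t z (y0 _) h.le hz, ?_⟩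
      rw [hJpl t z (hDv z hz) (supp_of_mem hD hz), hzu]
      ext i
      by_cases hi : i = Fin.last n
      · subst hi; simp [u, ht]
      · simp [u, hi, hp.ne']

/-- Extension lemma: a piecewise linear map on a finite simplicial complex `Δ` which sends a
distinguished vertex `v` to `(0, …, 0, 1)` and restricts to a homeomorphism from the
realisation of `Δ` minus `v` onto the standard `(n-1)`-simplex extends, after enlarging `Δ` to
a simplicial complex `Δ'` on a larger finite vertex set inducing `Δ`, to a piecewise linear
homeomorphism onto the standard `n`-simplex in `ℝ^{n+1}`. -/
theorem statement_18 (s : Finset ℕ) (Δ : Set (Finset ℕ)) (hΔ : IsComplexOn ℕ s Δ)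
    (v : ℕ) (hv : {v} ∈ Δ) (n : ℕ) (g : ℕ → Fin (n + 1) → ℝ)
    (hgv : plMap g (Pi.single v 1) = Pi.single (Fin.last n) 1)
    (hhomeo : ∃ e : @Homeomorph (geomReal ℕ { F ∈ Δ | v ∉ F }) (stdSimplexIn (n + 1) n)
        (geomTop ℕ { F ∈ Δ | v ∉ F }) inferInstance,
      ∀ x : geomReal ℕ { F ∈ Δ | v ∉ F }, (e x : Fin (n + 1) → ℝ) = plMap g (x : ℕ → ℝ)) :
    ∃ (s' : Finset ℕ) (Δ' : Set (Finset ℕ)) (g' : ℕ → Fin (n + 1) → ℝ),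
      s ⊆ s' ∧ IsComplexOn ℕ s' Δ' ∧ { F ∈ Δ' | F ⊆ s } = Δ ∧
      (∃ e : @Homeomorph (geomReal ℕ Δ') (stdSimplexIn (n + 1) (n + 1))
          (geomTop ℕ Δ') inferInstance,
        ∀ x : geomReal ℕ Δ', (e x : Fin (n + 1) → ℝ) = plMap g' (x : ℕ → ℝ)) ∧
      ∀ x ∈ geomReal ℕ Δ, plMap g' x = plMap g x := by
  obtain ⟨e, he⟩ := hhomeo
  have hvs : v ∈ s := hΔ.1 _ hv (by simp)
  have h0 : ∅ ∈ Δ := hΔ.2 _ hv _ (by simp)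
  have hgv' : g v = Pi.single (Fin.last n) 1 := by
    rw [← hgv, plMap_eq g _ {v}]
    · simp
    · intro w hw
      have : w ≠ v := by simpa using hw
      simp [this]
  have hb : Set.BijOn (plMap g) (geomReal ℕ { F ∈ Δ | v ∉ F }) (stdSimplexIn (n + 1) n) := by
    refine ⟨fun x hx => ?_, fun x hx x' hx' h => ?_, fun y hy => ?_⟩
    · rw [← he ⟨x, hx⟩]; exact (e ⟨x, hx⟩).2
    · have h1 : e ⟨x, hx⟩ = e ⟨x', hx'⟩ := Subtype.ext (by rw [he, he]; exact h)
      exact congrArg Subtype.val ((@Homeomorph.toEquiv _ _ (_) (_) e).injective h1)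
    · obtain ⟨x, hx⟩ := (@Homeomorph.toEquiv _ _ (_) (_) e).surjective ⟨y, hy⟩
      refine ⟨x, x.2, ?_⟩
      rw [← he x]
      exact congrArg Subtype.val hx
  obtain ⟨hC, hCb⟩ := cone_bijOn s Δ hΔ v hvs n g hgv' h0 hb
  obtain ⟨s', K, g', h1, h2, h3, h4, h5⟩ := main_induction s Δ hΔ h0 g
    (stdSimplexIn (n + 1) (n + 1)) _ s {F | F.erase v ∈ Δ} g subset_rfl hC
    (fun F hF => hΔ.2 F hF _ (Finset.erase_subset _ _)) (fun _ _ => rfl) hCb le_rfl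
  refine ⟨s', K, g', h1, h2, h3, homeo_of_bijOn K s' h2.1 g' _ h5, fun x hx => ?_⟩
  have hx' := supp_of_mem hΔ.1 hx
  rw [plMap_eq g' x s hx', plMap_eq g x s hx']
  exact Finset.sum_congr rfl (fun w hw => by rw [h4 w hw])
end
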